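/- Let P and P' be convex polytopes in ℝ³ with non-empty interior such that g_P = g_{P'}. Suppose that for some w ∈ S², S₁ := P_w and S₂ := P_{−w} are parallel edges of P of equal length. Then S₁' := P'_w and S₂' := P'_{−w} are edges of P' parallel to S₁ whose lengths equal λ₁(S₁). Moreover, either cone(P,S₁) = cone(P',S₁') and cone(P,S₂) = cone(P',S₂'), or else cone(P,S₁) = −cone(P',S₂') and cone(P,S₂) = −cone(P',S₁'). -/

import Mathlib

open MeasureTheory Pointwise

/-- The covariogram of a set `K ⊆ ℝ³`: `g_K(x) = λ₃(K ∩ (K + x))`. -/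
noncomputable def covariogram (K : Set (EuclideanSpace ℝ (Fin 3)))
    (x : EuclideanSpace ℝ (Fin 3)) : ℝ :=
  (volume (K ∩ ((x + ·) '' K))).toReal

/-- A (compact) convex polytope: the convex hull of a finite set. -/
def IsPolytope (P : Set (EuclideanSpace ℝ (Fin 3))) : Prop :=
  ∃ S : Finset (EuclideanSpace ℝ (Fin 3)),
    P = convexHull ℝ (S : Set (EuclideanSpace ℝ (Fin 3)))

/-- The exposed face of `P` in direction `w`: `P_w = {x ∈ P : x·w = h_P(w)}`. -/
def exposedFace (P : Set (EuclideanSpace ℝ (Fin 3)))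
    (w : EuclideanSpace ℝ (Fin 3)) : Set (EuclideanSpace ℝ (Fin 3)) :=
  {x ∈ P | ∀ y ∈ P, @inner ℝ _ _ w y ≤ @inner ℝ _ _ w x}

/-- The support cone of `P` at a face `F`:
`cone(P,F) = {μ(y − x) : y ∈ P, μ ≥ 0}` for `x ∈ relint F`. -/
def supportCone (P F : Set (EuclideanSpace ℝ (Fin 3))) :
    Set (EuclideanSpace ℝ (Fin 3)) :=
  {v | ∃ x ∈ intrinsicInterior ℝ F, ∃ y ∈ P, ∃ μ : ℝ, 0 ≤ μ ∧ v = μ • (y - x)}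

/-! The covariogram is the convolution `g_P = 1_P * 1_{-P}`, so `g_P = g_{P'}` says that the
products of the Laplace transforms of `P` and `-P`, and of `P'` and `-P'`, agree. The supports of
the two covariograms agree as well: `P - P = P' - P'`, whose face exposed in direction `w` is the
sum of the faces of `P` and `-P`. Hence the faces of `P'` and `-P'` are segments parallel to those
of `P` and `-P`, with the same sum of base points and the same sum of lengths.

Place the edges at the origin along the first axis and blow up the other two coordinates. The
rescaled bodies converge to (segment) × (planar sector `α x ≤ y ≤ β x`), and the rescaled Laplace
transforms at the frequency `(τ, r, -1)` converge to the transform of the segment at `τ` times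
`(β - α) / ((r - α) (r - β))`. Comparing products, the dependence on `τ` shows that all four edges
have the same length, and the dependence on `r` determines the four slopes up to order. Since `P`
and `-P` are reflections of each other their sectors overlap; this and the product of the widths
leave only the two ways of pairing the slopes allowed by the theorem. -/

local notation "ℝ³" => EuclideanSpace ℝ (Fin 3)

section Convolution

variable {G : Type*} [AddGroup G] [MeasurableSpace G] [MeasurableAdd₂ G] [MeasurableSub₂ G]
  {μ : Measure G} [SFinite μ] [μ.IsAddRightInvariant]

theorem lintegral_mul_lintegral_eq_lintegral_convolution {f g : G → ENNReal}
    (hf : Measurable f) (hg : Measurable g) :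
    (∫⁻ y, f y ∂μ) * (∫⁻ z, g z ∂μ) = ∫⁻ z, ∫⁻ y, g (z - y) * f y ∂μ ∂μ := by
  have translate (y : G) : ∫⁻ z, g (z - y) * f y ∂μ = f y * ∫⁻ z, g z ∂μ := by
    rw [lintegral_mul_const _ (by fun_prop), lintegral_sub_right_eq_self g y, mul_comm]
  rw [lintegral_lintegral_swap (by fun_prop)]
  simp_rw [translate]
  rw [lintegral_mul_const _ hf]

theorem setLIntegral_mul_setLIntegral_of_multiplicative {K L : Set G} (hK : MeasurableSet K)
    (hL : MeasurableSet L) {χ : G → ENNReal} (hχ : Measurable χ)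
    (map_add : ∀ x y, χ (x + y) = χ x * χ y) :
    (∫⁻ y in K, χ y ∂μ) * (∫⁻ z in L, χ z ∂μ) = ∫⁻ z, χ z * μ (K ∩ {y | z - y ∈ L}) ∂μ := by
  rw [← lintegral_indicator hK, ← lintegral_indicator hL,
    lintegral_mul_lintegral_eq_lintegral_convolution (hχ.indicator hK) (hχ.indicator hL)]
  refine lintegral_congr fun z ↦ ?_
  have hKL : MeasurableSet (K ∩ {y | z - y ∈ L}) :=
    hK.inter (measurable_const.sub measurable_id hL)
  rw [← setLIntegral_const, ← lintegral_indicator hKL]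
  refine lintegral_congr fun y ↦ ?_
  have hz : χ z = χ (z - y) * χ y := by rw [← map_add, sub_add_cancel]
  by_cases hy : y ∈ K <;> by_cases hzy : z - y ∈ L <;> simp [hy, hzy, hz]

end Convolution

section Charts

variable {E F : Type*} [NormedAddCommGroup E] [NormedSpace ℝ E] [NormedAddCommGroup F]
  [NormedSpace ℝ F]

/-- The set `P` seen in the affine coordinates with origin `a` and linear part `ψ`. -/
def chart (ψ : F ≃L[ℝ] E) (a : E) (P : Set E) : Set F := {k | a + ψ k ∈ P}

theorem mem_chart {ψ : F ≃L[ℝ] E} {a : E} {P : Set E} {k : F} :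
    k ∈ chart ψ a P ↔ a + ψ k ∈ P := Iff.rfl

theorem isCompact_chart (ψ : F ≃L[ℝ] E) (a : E) {P : Set E} (hP : IsCompact P) :
    IsCompact (chart ψ a P) :=
  (ψ.toHomeomorph.trans (Homeomorph.addLeft a)).isClosedEmbedding.isCompact_preimage hP

theorem convex_chart (ψ : F ≃L[ℝ] E) (a : E) {P : Set E} (hP : Convex ℝ P) :
    Convex ℝ (chart ψ a P) :=
  (hP.translate_preimage_right a).is_linear_preimage ψ.toLinearMap.isLinear

theorem chart_interior (ψ : F ≃L[ℝ] E) (a : E) (P : Set E) :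
    interior (chart ψ a P) = chart ψ a (interior P) :=
  ((ψ.toHomeomorph.trans (Homeomorph.addLeft a)).preimage_interior P).symm

theorem chart_convexHull (ψ : F ≃L[ℝ] E) (a : E) (S : Set E) :
    chart ψ a (convexHull ℝ S) = convexHull ℝ (chart ψ a S) := by
  have chart_eq_image (P : Set E) : chart ψ a P = ψ.symm '' (-a +ᵥ P) := by
    rw [ψ.symm.image_eq_preimage_symm]
    ext k
    simp [mem_chart, Set.mem_neg_vadd_set_iff]
  rw [chart_eq_image, chart_eq_image, ← convexHull_vadd]
  exact ψ.symm.toLinearMap.image_convexHull _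

theorem chart_inter_sub_mem_chart_neg (ψ : F ≃L[ℝ] E) (a c : E) (P : Set E) (z : F) :
    chart ψ a P ∩ {y | z - y ∈ chart ψ c (-P)} =
      ψ ⁻¹' ((a + ·) ⁻¹' (P ∩ (a + c + ψ z + ·) '' P)) := by
  ext y
  have reflect : -(c + ψ (z - y)) = -(a + c + ψ z) + (a + ψ y) := by rw [map_sub]; abel
  simp only [Set.image_add_left, Set.mem_inter_iff, Set.mem_preimage, Set.mem_ofPred_eq, mem_chart,
    Set.mem_neg, reflect]

variable [MeasurableSpace F] [BorelSpace F] {μ : Measure F} [μ.IsAddHaarMeasure]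

theorem addHaar_preimage_eq_of_eq [MeasurableSpace E] [BorelSpace E] [FiniteDimensional ℝ E]
    (ψ : F ≃L[ℝ] E) {ν : Measure E} [ν.IsAddHaarMeasure] {A B : Set E}
    (hA : MeasurableSet A) (hB : MeasurableSet B) (hAB : ν A = ν B) :
    μ (ψ ⁻¹' A) = μ (ψ ⁻¹' B) := by
  have := ψ.isAddHaarMeasure_map μ
  rw [← Measure.map_apply ψ.continuous.measurable hA,
    ← Measure.map_apply ψ.continuous.measurable hB,
    Measure.isAddLeftInvariant_eq_smul (μ.map ψ) ν, Measure.smul_apply, Measure.smul_apply, hAB]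

theorem volume_inter_translate_eq_of_covariogram_eq {P P' : Set ℝ³} (hP : IsCompact P)
    (hP' : IsCompact P') (hcov : covariogram P = covariogram P') (x : ℝ³) :
    volume (P ∩ (x + ·) '' P) = volume (P' ∩ (x + ·) '' P') :=
  (ENNReal.toReal_eq_toReal_iff' (hP.inter_right (hP.image (by fun_prop)).isClosed).measure_ne_top
    (hP'.inter_right (hP'.image (by fun_prop)).isClosed).measure_ne_top).1 (congrFun hcov x)

theorem laplace_chart_mul_eq_of_covariogram_eq [FiniteDimensional ℝ F] {P P' : Set ℝ³}
    (hP : IsCompact P) (hP' : IsCompact P') (hcov : covariogram P = covariogram P') {a c a' c' : ℝ³}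
    (hac : a + c = a' + c') (ψ : F ≃L[ℝ] ℝ³) {χ : F → ENNReal} (hχ : Measurable χ)
    (map_add : ∀ x y, χ (x + y) = χ x * χ y) :
    (∫⁻ y in chart ψ a P, χ y ∂μ) * (∫⁻ y in chart ψ c (-P), χ y ∂μ) =
      (∫⁻ y in chart ψ a' P', χ y ∂μ) * (∫⁻ y in chart ψ c' (-P'), χ y ∂μ) := by
  have measurable_chart (a : ℝ³) {Q : Set ℝ³} (hQ : IsCompact Q) : MeasurableSet (chart ψ a Q) :=
    (isCompact_chart ψ a hQ).measurableSet
  have measurable_overlap (x : ℝ³) {Q : Set ℝ³} (hQ : IsCompact Q) :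
      MeasurableSet (Q ∩ (x + ·) '' Q) :=
    hQ.measurableSet.inter (hQ.image (by fun_prop)).measurableSet
  rw [setLIntegral_mul_setLIntegral_of_multiplicative (measurable_chart a hP)
      (measurable_chart c hP.neg) hχ map_add,
    setLIntegral_mul_setLIntegral_of_multiplicative (measurable_chart a' hP')
      (measurable_chart c' hP'.neg) hχ map_add]
  refine lintegral_congr fun z ↦ ?_
  rw [chart_inter_sub_mem_chart_neg, chart_inter_sub_mem_chart_neg, ← hac]
  congr 1
  refine addHaar_preimage_eq_of_eq ψ (ν := volume)
    (measurable_const_add a (measurable_overlap _ hP))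
    (measurable_const_add a' (measurable_overlap _ hP')) ?_
  rw [measure_preimage_add, measure_preimage_add,
    volume_inter_translate_eq_of_covariogram_eq hP hP' hcov]

end Charts

section BlowUp

open Filter Topology

variable {V W : Type*} [NormedAddCommGroup W] [NormedSpace ℝ W] {K : Set (V × W)}

/-- The section of `K` by the axis `V × {0}`. -/
def axialSection (K : Set (V × W)) : Set V := {s | (s, 0) ∈ K}

/-- The cone spanned by the projection of `K` to the factor transverse to the axis. -/
def transverseCone (K : Set (V × W)) : Set W := {w | ∃ κ > (0 : ℝ), ∃ s, (s, κ • w) ∈ K}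

/-- The set `K` stretched by the factor `ε⁻¹` transversally to the axis `V × {0}`. -/
def blowUp (K : Set (V × W)) (ε : ℝ) : Set (V × W) := {p | (p.1, ε • p.2) ∈ K}

theorem blowUp_subset_prod {ε : ℝ} (hε : 0 < ε) :
    blowUp K ε ⊆ (Prod.fst '' K) ×ˢ transverseCone K :=
  fun p hp ↦ ⟨⟨_, hp, rfl⟩, ε, hε, p.1, hp⟩

variable [NormedAddCommGroup V] [NormedSpace ℝ V]

theorem convex_axialSection (hK : Convex ℝ K) : Convex ℝ (axialSection K) :=
  hK.is_linear_preimage (LinearMap.inl ℝ V W).isLinear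

theorem eventually_add_smul_mem_of_convex (hK : Convex ℝ K) {s₀ : V}
    (hs₀ : s₀ ∈ interior (axialSection K)) {w : W} (hw : w ∈ transverseCone K) (s : V) :
    ∀ᶠ ε : ℝ in 𝓝[>] 0, (s₀ + ε • s, ε • w) ∈ K := by
  obtain ⟨κ, hκ, s₁, hs₁⟩ := hw
  -- `(s₀ + ε • s, ε • w)` lies on the segment from `(foot ε, 0)` to `(s₁, κ • w)`.
  let foot : ℝ → V := fun ε ↦ (1 - ε / κ)⁻¹ • (s₀ + ε • s - (ε / κ) • s₁)
  have foot_tendsto : Tendsto foot (𝓝 0) (𝓝 s₀) := by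
    have : ContinuousAt foot 0 :=
      ContinuousAt.smul (ContinuousAt.inv₀ (by fun_prop) (by simp)) (by fun_prop)
    simpa [ContinuousAt, foot] using this
  filter_upwards [(foot_tendsto.mono_left nhdsWithin_le_nhds).eventually
    (isOpen_interior.mem_nhds hs₀), Ioo_mem_nhdsGT hκ] with ε foot_interior ⟨ε_pos, ε_lt⟩
  have weight_pos : 0 < 1 - ε / κ := sub_pos.2 ((div_lt_one hκ).2 ε_lt)
  have foot_mem : (foot ε, 0) ∈ K := interior_subset (s := axialSection K) foot_interior
  have combination_mem := hK foot_mem hs₁ weight_pos.le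
    (div_nonneg ε_pos.le hκ.le) (sub_add_cancel _ _)
  rwa [Prod.smul_mk, Prod.smul_mk, Prod.mk_add_mk, smul_inv_smul₀ weight_pos.ne', sub_add_cancel,
    smul_zero, zero_add, smul_smul, div_mul_cancel₀ _ hκ.ne'] at combination_mem

theorem eventually_mem_blowUp_iff (hconv : Convex ℝ K) (hclosed : IsClosed K) {p : V × W}
    (hp : p.1 ∉ frontier (axialSection K)) :
    ∀ᶠ ε : ℝ in 𝓝[>] 0, p ∈ blowUp K ε ↔ p ∈ axialSection K ×ˢ transverseCone K := by
  by_cases hs : p.1 ∈ axialSection K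
  · by_cases hw : p.2 ∈ transverseCone K
    · have hs_int : p.1 ∈ interior (axialSection K) := by
        by_contra h
        exact hp ⟨subset_closure hs, h⟩
      filter_upwards [eventually_add_smul_mem_of_convex hconv hs_int hw 0] with ε hε
      exact iff_of_true (by simpa [blowUp] using hε) ⟨hs, hw⟩
    · filter_upwards [self_mem_nhdsWithin] with ε hε
      exact iff_of_false (fun h ↦ hw (blowUp_subset_prod hε h).2) fun h ↦ hw h.2
  · have approach : Tendsto (fun ε : ℝ ↦ (p.1, ε • p.2)) (𝓝[>] 0) (𝓝 (p.1, 0)) := by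
      have : Continuous fun ε : ℝ ↦ (p.1, ε • p.2) := by fun_prop
      simpa using (this.tendsto 0).mono_left nhdsWithin_le_nhds
    filter_upwards [approach.eventually (hclosed.isOpen_compl.mem_nhds hs)] with ε hε
    exact iff_of_false hε fun h ↦ hs h.1

variable [FiniteDimensional ℝ V] [MeasurableSpace V] [BorelSpace V] [MeasurableSpace W]
  [BorelSpace W] [SecondCountableTopology W] {μ : Measure V} [μ.IsAddHaarMeasure]
  {ν : Measure W} [SFinite ν]

theorem tendsto_setLIntegral_blowUp (hconv : Convex ℝ K) (hcomp : IsCompact K)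
    (hcone : MeasurableSet (transverseCone K)) {f : V → ENNReal} {g : W → ENNReal}
    (hf : Measurable f) (hg : Measurable g) (f_fin : ∫⁻ s in Prod.fst '' K, f s ∂μ ≠ ⊤)
    (g_fin : ∫⁻ w in transverseCone K, g w ∂ν ≠ ⊤) :
    Tendsto (fun ε ↦ ∫⁻ p in blowUp K ε, f p.1 * g p.2 ∂μ.prod ν) (𝓝[>] 0)
      (𝓝 ((∫⁻ s in axialSection K, f s ∂μ) * ∫⁻ w in transverseCone K, g w ∂ν)) := by
  have setLIntegral_prod (A : Set V) :
      ∫⁻ p in A ×ˢ transverseCone K, f p.1 * g p.2 ∂μ.prod ν =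
        (∫⁻ s in A, f s ∂μ) * ∫⁻ w in transverseCone K, g w ∂ν := by
    rw [← Measure.prod_restrict, lintegral_prod_mul hf.aemeasurable hg.aemeasurable]
  have section_measurable : MeasurableSet (axialSection K) :=
    (hcomp.isClosed.preimage (by fun_prop)).measurableSet
  have image_measurable : MeasurableSet (Prod.fst '' K) :=
    (hcomp.image continuous_fst).measurableSet
  have blowUp_measurable (ε : ℝ) : MeasurableSet (blowUp K ε) :=
    (hcomp.isClosed.preimage (by fun_prop)).measurableSet
  have fst_notMem_frontier : ∀ᵐ p ∂μ.prod ν, p.1 ∉ frontier (axialSection K) :=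
    Measure.quasiMeasurePreserving_fst.ae
      (measure_eq_zero_iff_ae_notMem.1 ((convex_axialSection hconv).addHaar_frontier μ))
  rw [← setLIntegral_prod, ← lintegral_indicator (section_measurable.prod hcone)]
  simp_rw [← lintegral_indicator (blowUp_measurable _)]
  refine tendsto_lintegral_filter_of_dominated_convergence
    (((Prod.fst '' K) ×ˢ transverseCone K).indicator fun p ↦ f p.1 * g p.2)
    (.of_forall fun ε ↦ Measurable.indicator (by fun_prop) (blowUp_measurable ε)) ?_ ?_ ?_
  · filter_upwards [self_mem_nhdsWithin] with ε hε
    exact .of_forall <| Set.indicator_le_indicator_of_subset (blowUp_subset_prod hε)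
      fun _ ↦ zero_le
  · rw [lintegral_indicator (image_measurable.prod hcone), setLIntegral_prod]
    exact ENNReal.mul_ne_top f_fin g_fin
  · filter_upwards [fst_notMem_frontier] with p hp
    refine tendsto_const_nhds.congr' ?_
    filter_upwards [eventually_mem_blowUp_iff hconv hcomp.isClosed hp] with ε hε
    exact (Set.indicator_eq_indicator hε rfl).symm

end BlowUp

section Sector

open Filter Topology

/-- The planar sector of points `(t, x)` with `t ≥ 0` and slope `x / t` between `α` and `β`. -/
def sector (α β : ℝ) : Set (ℝ × ℝ) := {p | 0 ≤ p.1 ∧ α * p.1 ≤ p.2 ∧ p.2 ≤ β * p.1}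

theorem measurableSet_sector (α β : ℝ) : MeasurableSet (sector α β) := by
  unfold sector
  measurability

theorem setLIntegral_sector (α β : ℝ) {f : ℝ × ℝ → ENNReal} (hf : Measurable f) :
    ∫⁻ p in sector α β, f p = ∫⁻ t in Set.Ici 0, ∫⁻ x in Set.Icc (α * t) (β * t), f (t, x) := by
  rw [← lintegral_indicator (measurableSet_sector α β), Measure.volume_eq_prod,
    lintegral_prod _ (hf.indicator (measurableSet_sector α β)).aemeasurable,
    ← lintegral_indicator measurableSet_Ici]
  refine lintegral_congr fun t ↦ ?_
  by_cases ht : 0 ≤ t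
  · rw [Set.indicator_of_mem (Set.mem_Ici.2 ht), ← lintegral_indicator measurableSet_Icc]
    refine lintegral_congr fun x ↦ Set.indicator_eq_indicator ?_ rfl
    simp only [sector, Set.mem_ofPred_eq, ht, true_and, Set.mem_Icc]
  · simp [sector, Set.indicator, ht]

theorem setLIntegral_Icc_ofReal {f : ℝ → ℝ} (hf : Continuous f) (hf₀ : ∀ x, 0 ≤ f x) {a b : ℝ}
    (hab : a ≤ b) :
    ∫⁻ x in Set.Icc a b, ENNReal.ofReal (f x) = ENNReal.ofReal (∫ x in a..b, f x) := by
  rw [← ofReal_integral_eq_lintegral_ofReal hf.integrableOn_Icc (.of_forall hf₀),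
    integral_Icc_eq_integral_Ioc, intervalIntegral.integral_of_le hab]

theorem integral_exp_mul_Ici_sub {a b : ℝ} (ha : a < 0) (hb : b < 0) :
    IntegrableOn (fun t ↦ Real.exp (b * t) - Real.exp (a * t)) (Set.Ici 0) ∧
      ∫ t in Set.Ici 0, (Real.exp (b * t) - Real.exp (a * t)) = (b - a) / (a * b) := by
  have ha_int := integrableOn_exp_mul_Ioi ha 0
  have hb_int := integrableOn_exp_mul_Ioi hb 0
  refine ⟨(integrableOn_Ici_iff_integrableOn_Ioi).2 (hb_int.sub ha_int), ?_⟩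
  rw [integral_Ici_eq_integral_Ioi, integral_sub hb_int ha_int, integral_exp_mul_Ioi ha,
    integral_exp_mul_Ioi hb, mul_zero, mul_zero, Real.exp_zero]
  field_simp [ha.ne, hb.ne]
  ring

theorem setLIntegral_sector_exp {α β r : ℝ} (hαβ : α ≤ β) (hr : β < r) :
    ∫⁻ p in sector α β, ENNReal.ofReal (Real.exp (p.2 - r * p.1)) =
      ENNReal.ofReal ((β - α) / ((r - α) * (r - β))) := by
  have inner_integral (t : ℝ) (ht : t ∈ Set.Ici 0) :
      ∫⁻ x in Set.Icc (α * t) (β * t), ENNReal.ofReal (Real.exp (x - r * t)) =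
        ENNReal.ofReal (Real.exp ((β - r) * t) - Real.exp ((α - r) * t)) := by
    rw [setLIntegral_Icc_ofReal (by fun_prop) (fun x ↦ (Real.exp_pos _).le)
        (mul_le_mul_of_nonneg_right hαβ ht),
      intervalIntegral.integral_comp_sub_right Real.exp, integral_exp, sub_mul, sub_mul]
  obtain ⟨outer_integrable, outer_integral⟩ :=
    integral_exp_mul_Ici_sub (sub_neg.2 (hαβ.trans_lt hr)) (sub_neg.2 hr)
  have outer_nonneg : 0 ≤ᵐ[volume.restrict (Set.Ici 0)]
      fun t ↦ Real.exp ((β - r) * t) - Real.exp ((α - r) * t) := by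
    filter_upwards [ae_restrict_mem measurableSet_Ici] with t ht
    exact sub_nonneg.2 <| Real.exp_le_exp.2 <|
      mul_le_mul_of_nonneg_right (sub_le_sub_right hαβ r) ht
  rw [setLIntegral_sector α β (by fun_prop),
    setLIntegral_congr_fun measurableSet_Ici inner_integral,
    ← ofReal_integral_eq_lintegral_ofReal outer_integrable outer_nonneg, outer_integral]
  congr 1
  rw [← neg_sub r α, ← neg_sub r β, neg_mul_neg]
  ring

theorem convex_sector (α β : ℝ) : Convex ℝ (sector α β) := by
  rintro ⟨t, x⟩ ⟨ht, hα, hβ⟩ ⟨t', x'⟩ ⟨ht', hα', hβ'⟩ c d hc hd -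
  have combine {y z y' z' : ℝ} (h : y ≤ z) (h' : y' ≤ z') : c * y + d * y' ≤ c * z + d * z' :=
    add_le_add (mul_le_mul_of_nonneg_left h hc) (mul_le_mul_of_nonneg_left h' hd)
  refine ⟨add_nonneg (mul_nonneg hc ht) (mul_nonneg hd ht'), ?_, ?_⟩
  · dsimp only [Prod.smul_mk, Prod.mk_add_mk, smul_eq_mul] at hα hα' ⊢
    linear_combination combine hα hα'
  · dsimp only [Prod.smul_mk, Prod.mk_add_mk, smul_eq_mul] at hβ hβ' ⊢
    linear_combination combine hβ hβ'

theorem smul_mem_sector_iff {α β κ : ℝ} (hκ : 0 < κ) {w : ℝ × ℝ} :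
    κ • w ∈ sector α β ↔ w ∈ sector α β := by
  simp only [sector, Set.mem_ofPred_eq, Prod.smul_fst, Prod.smul_snd, smul_eq_mul,
    mul_left_comm _ κ, mul_le_mul_iff_right₀ hκ, mul_nonneg_iff_of_pos_left hκ]

theorem zero_mem_sector (α β : ℝ) : (0 : ℝ × ℝ) ∈ sector α β := by simp [sector]

theorem eq_zero_of_mem_sector {α β : ℝ} {w : ℝ × ℝ} (hw : w ∈ sector α β) (h : w.1 = 0) :
    w = 0 := by
  obtain ⟨-, hα, hβ⟩ := hw
  rw [h, mul_zero] at hα hβ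
  exact Prod.ext h (le_antisymm hβ hα)

theorem lt_of_interior_sector_nonempty {α β : ℝ} (h : (interior (sector α β)).Nonempty) :
    α < β := by
  obtain ⟨⟨t, x⟩, htx⟩ := h
  obtain ⟨ht, hα, -⟩ := interior_subset htx
  have vertical : ∀ᶠ y in 𝓝 x, (t, y) ∈ sector α β :=
    (Continuous.prodMk_right t).continuousAt.eventually (mem_interior_iff_mem_nhds.1 htx)
  obtain ⟨y, hxy, -, -, hβ⟩ := vertical.exists_gt
  exact lt_of_mul_lt_mul_right ((hα.trans_lt hxy).trans_le hβ) ht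

theorem exists_smul_mem_of_mem_sector {Q : Set (ℝ × ℝ)} (hQ : Convex ℝ Q) (zero_mem : 0 ∈ Q)
    {p q : ℝ × ℝ} (hp : p ∈ Q) (hq : q ∈ Q) (hp₀ : 0 < p.1) (hq₀ : 0 < q.1) {w : ℝ × ℝ}
    (hw : w ∈ sector (p.2 / p.1) (q.2 / q.1)) : ∃ κ > (0 : ℝ), κ • w ∈ Q := by
  rcases hw.1.eq_or_lt with hw₀ | hw₀
  · exact ⟨1, one_pos, by rwa [eq_zero_of_mem_sector hw hw₀.symm, smul_zero]⟩
  let κ := min p.1 q.1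
  have κ_pos : 0 < κ := lt_min hp₀ hq₀
  have rescale {v : ℝ × ℝ} (hv₀ : 0 < v.1) : (κ / v.1) • v = (κ, κ * (v.2 / v.1)) := by
    rw [Prod.smul_def, smul_eq_mul, smul_eq_mul, div_mul_cancel₀ _ hv₀.ne', div_mul_eq_mul_div,
      mul_div_assoc]
  have slope_mem {v : ℝ × ℝ} (hv : v ∈ Q) (hv₀ : 0 < v.1) (hκ : κ ≤ v.1) :
      (κ, κ * (v.2 / v.1)) ∈ Q :=
    rescale hv₀ ▸ hQ.smul_mem_of_zero_mem zero_mem hv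
      ⟨div_nonneg κ_pos.le hv₀.le, div_le_one_of_le₀ hκ hv₀.le⟩
  have slopes_ordConnected : Set.OrdConnected {m : ℝ | (κ, κ * m) ∈ Q} :=
    (hQ.affine_preimage
      (AffineMap.prod (AffineMap.const ℝ ℝ κ) (κ • AffineMap.id ℝ ℝ))).ordConnected
  have w_slope_mem : (κ, κ * (w.2 / w.1)) ∈ Q :=
    slopes_ordConnected.out (slope_mem hp hp₀ (min_le_left _ _))
      (slope_mem hq hq₀ (min_le_right _ _))
      ⟨(le_div_iff₀ hw₀).2 hw.2.1, (div_le_iff₀ hw₀).2 hw.2.2⟩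
  exact ⟨κ / w.1, div_pos κ_pos hw₀, by rwa [rescale hw₀]⟩

theorem exists_coneHull_eq_sector {T : Set (ℝ × ℝ)} (hT : T.Finite)
    (fst_nonneg : ∀ p ∈ T, 0 ≤ p.1) (apex : ∀ p ∈ T, p.1 = 0 → p = 0)
    (zero_mem : 0 ∈ convexHull ℝ T) (h_int : (interior (convexHull ℝ T)).Nonempty) :
    ∃ α β, α < β ∧ {w | ∃ κ > (0 : ℝ), κ • w ∈ convexHull ℝ T} = sector α β := by
  have subset_sector {α β : ℝ} (h : ∀ p ∈ T, 0 < p.1 → p ∈ sector α β) :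
      convexHull ℝ T ⊆ sector α β := by
    refine convexHull_min (fun p hp ↦ ?_) (convex_sector α β)
    rcases (fst_nonneg p hp).eq_or_lt with hp₀ | hp₀
    · exact apex p hp hp₀.symm ▸ zero_mem_sector α β
    · exact h p hp hp₀
  let S := {p ∈ T | 0 < p.1}
  have S_finite : S.Finite := hT.subset fun _ hp ↦ hp.1
  have S_nonempty : S.Nonempty := by
    by_contra! hS
    exact lt_irrefl _ <| lt_of_interior_sector_nonempty <| h_int.mono <| interior_mono <|
      subset_sector (α := 0) (β := 0) fun p hp hp₀ ↦
        (Set.eq_empty_iff_forall_notMem.1 hS p ⟨hp, hp₀⟩).elim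
  obtain ⟨p, hp, p_min⟩ := Set.exists_min_image S (fun p ↦ p.2 / p.1) S_finite S_nonempty
  obtain ⟨q, hq, q_max⟩ := Set.exists_max_image S (fun p ↦ p.2 / p.1) S_finite S_nonempty
  have hull_subset : convexHull ℝ T ⊆ sector (p.2 / p.1) (q.2 / q.1) :=
    subset_sector fun v hv hv₀ ↦ ⟨hv₀.le, (le_div_iff₀ hv₀).1 (p_min v ⟨hv, hv₀⟩),
      (div_le_iff₀ hv₀).1 (q_max v ⟨hv, hv₀⟩)⟩
  have slope_lt : p.2 / p.1 < q.2 / q.1 :=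
    lt_of_interior_sector_nonempty (h_int.mono (interior_mono hull_subset))
  refine ⟨_, _, slope_lt, Set.Subset.antisymm ?_ fun w hw ↦ ?_⟩
  · rintro w ⟨κ, hκ, hw⟩
    exact (smul_mem_sector_iff hκ).1 (hull_subset hw)
  · exact exists_smul_mem_of_mem_sector (convex_convexHull ℝ T) zero_mem
      (subset_convexHull ℝ T hp.1) (subset_convexHull ℝ T hq.1) hp.2 hq.2 hw

end Sector

section SegmentLaplace

open Filter Topology

/-- The Laplace transform of the segment `[0, l]`. -/
noncomputable def segmentLaplace (τ l : ℝ) : ℝ := ∫ s in 0..l, Real.exp (-(τ * s))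

theorem segmentLaplace_zero (l : ℝ) : segmentLaplace 0 l = l := by simp [segmentLaplace]

theorem segmentLaplace_nonneg (τ : ℝ) {l : ℝ} (hl : 0 ≤ l) : 0 ≤ segmentLaplace τ l :=
  intervalIntegral.integral_nonneg hl fun _ _ ↦ (Real.exp_pos _).le

theorem setLIntegral_exp_eq_segmentLaplace (τ : ℝ) {l : ℝ} (hl : 0 ≤ l) :
    ∫⁻ s in Set.Icc 0 l, ENNReal.ofReal (Real.exp (-(τ * s))) =
      ENNReal.ofReal (segmentLaplace τ l) :=
  setLIntegral_Icc_ofReal (by fun_prop) (fun _ ↦ (Real.exp_pos _).le) hl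

theorem mul_segmentLaplace (τ l : ℝ) : τ * segmentLaplace τ l = 1 - Real.exp (-(τ * l)) := by
  have := intervalIntegral.smul_integral_comp_mul_left (a := 0) (b := l) (fun x ↦ Real.exp (-x)) τ
  simpa [segmentLaplace] using this

theorem tendsto_mul_segmentLaplace {l : ℝ} (hl : 0 < l) :
    Tendsto (fun τ ↦ τ * segmentLaplace τ l) atTop (𝓝 1) := by
  have decay : Tendsto (fun τ ↦ Real.exp (-(τ * l))) atTop (𝓝 0) :=
    Real.tendsto_exp_neg_atTop_nhds_zero.comp (tendsto_id.atTop_mul_const hl)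
  simpa only [mul_segmentLaplace, sub_zero] using decay.const_sub 1

theorem eq_of_segmentLaplace_mul_eq {l l₁ l₂ c d : ℝ} (hl : 0 < l) (hl₁ : 0 ≤ l₁) (hl₂ : 0 ≤ l₂)
    (hsum : l₁ + l₂ = l + l) (hc : c ≠ 0)
    (h : ∀ τ, segmentLaplace τ l * segmentLaplace τ l * c =
      segmentLaplace τ l₁ * segmentLaplace τ l₂ * d) : l₁ = l ∧ l₂ = l := by
  have at_zero : l * l * c = l₁ * l₂ * d := by simpa only [segmentLaplace_zero] using h 0
  have hl₁l₂ : l₁ * l₂ ≠ 0 :=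
    left_ne_zero_of_mul (at_zero ▸ mul_ne_zero (mul_ne_zero hl.ne' hl.ne') hc)
  have hl₁_pos : 0 < l₁ := hl₁.lt_of_ne' (left_ne_zero_of_mul hl₁l₂)
  have hl₂_pos : 0 < l₂ := hl₂.lt_of_ne' (right_ne_zero_of_mul hl₁l₂)
  have hcd : c = d := by
    have lim := ((tendsto_mul_segmentLaplace hl).mul (tendsto_mul_segmentLaplace hl)).mul_const c
    have lim' :=
      ((tendsto_mul_segmentLaplace hl₁_pos).mul (tendsto_mul_segmentLaplace hl₂_pos)).mul_const d
    simpa using tendsto_nhds_unique lim (lim'.congr fun τ ↦ by linear_combination -τ ^ 2 * h τ)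
  have product_eq : l * l = l₁ * l₂ := mul_right_cancel₀ hc (hcd ▸ at_zero)
  have difference_eq : l₁ - l₂ = 0 := (pow_eq_zero_iff two_ne_zero).1 <| by
    linear_combination (l₁ + l₂ + 2 * l) * hsum + 4 * product_eq
  constructor <;> linarith

end SegmentLaplace

section Multisets

open Filter Polynomial

theorem eq_and_eq_of_add_eq_add_of_forall_le {α : Type*} [LinearOrder α]
    {s t s' t' : Multiset α} (h : s + t = s' + t') (hst : ∀ a ∈ s, ∀ b ∈ t, a ≤ b)
    (hst' : ∀ a ∈ s', ∀ b ∈ t', a ≤ b) (hcard : s.card = s'.card) : s = s' ∧ t = t' := by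
  have sort_add {u v : Multiset α} (huv : ∀ a ∈ u, ∀ b ∈ v, a ≤ b) :
      (u + v).sort (· ≤ ·) = u.sort (· ≤ ·) ++ v.sort (· ≤ ·) := by
    refine List.Perm.eq_of_pairwise (le := (· ≤ ·)) (fun a b _ _ ↦ le_antisymm)
      ((u + v).pairwise_sort _) ?_ ?_
    · exact List.pairwise_append.2 ⟨u.pairwise_sort _, v.pairwise_sort _, by simpa using huv⟩
    · rw [← Multiset.coe_eq_coe, ← Multiset.coe_add]
      simp only [Multiset.sort_eq]
  have sorted_eq : s.sort (· ≤ ·) ++ t.sort (· ≤ ·) = s'.sort (· ≤ ·) ++ t'.sort (· ≤ ·) := by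
    rw [← sort_add hst, ← sort_add hst', h]
  obtain ⟨hs, ht⟩ := List.append_inj sorted_eq (by simpa using hcard)
  exact ⟨by rw [← s.sort_eq (· ≤ ·), hs, s'.sort_eq], by rw [← t.sort_eq (· ≤ ·), ht, t'.sort_eq]⟩

theorem eq_and_eq_of_eventually_div_prod_sub_eq {s t : Multiset ℝ} {c d : ℝ} (hc : c ≠ 0)
    (h : ∀ᶠ r in atTop, c / (s.map (r - ·)).prod = d / (t.map (r - ·)).prod) :
    c = d ∧ s = t := by
  let p (u : Multiset ℝ) : ℝ[X] := (u.map fun a ↦ X - C a).prod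
  have p_monic (u : Multiset ℝ) : (p u).Monic :=
    monic_multiset_prod_of_monic _ _ fun a _ ↦ monic_X_sub_C a
  have p_eval (u : Multiset ℝ) (r : ℝ) : (p u).eval r = (u.map (r - ·)).prod := by
    simp [p, eval_multiset_prod]
  have eval_eq : ∀ᶠ r in atTop, (C c * p t).eval r = (C d * p s).eval r := by
    filter_upwards [h, eventually_atTop_not_isRoot (p s) (p_monic s).ne_zero,
      eventually_atTop_not_isRoot (p t) (p_monic t).ne_zero] with r hr hs ht
    rw [← p_eval, ← p_eval] at hr
    rw [eval_C_mul, eval_C_mul]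
    exact (div_eq_div_iff hs ht).1 hr
  obtain ⟨r₀, hr₀⟩ := eventually_atTop.1 eval_eq
  have poly_eq : C c * p t = C d * p s :=
    eq_of_infinite_eval_eq _ _ ((Set.Ici_infinite r₀).mono hr₀)
  have hcd : c = d := by
    simpa [(p_monic t).leadingCoeff, (p_monic s).leadingCoeff] using congrArg leadingCoeff poly_eq
  rw [hcd] at poly_eq hc
  refine ⟨hcd, ?_⟩
  rw [← roots_multiset_prod_X_sub_C s, ← roots_multiset_prod_X_sub_C t]
  exact congrArg roots (mul_left_cancel₀ (C_ne_zero.2 hc) poly_eq).symm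

theorem multiset_pair_eq_pair_iff {α : Type*} {a b c d : α} :
    ({a, b} : Multiset α) = {c, d} ↔ a = c ∧ b = d ∨ a = d ∧ b = c :=
  Multiset.coe_eq_coe.trans (List.perm_pair.trans (by simp))

end Multisets

section EdgeShapes

open Filter Topology

/-- The local shape of a convex body at an edge: the length of the edge and the two slopes, in
transverse coordinates, of the wedge tangent to the body along it. -/
@[ext]
structure EdgeShape where
  length : ℝ
  lower : ℝ
  upper : ℝ
  length_nonneg : 0 ≤ length
  lower_lt_upper : lower < upper

namespace EdgeShape

variable {e f e' f' : EdgeShape}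

/-- The Laplace transform of the transverse sector of a shape. -/
noncomputable def transverseLaplace (e : EdgeShape) (r : ℝ) : ℝ :=
  (e.upper - e.lower) / ((r - e.lower) * (r - e.upper))

/-- The Laplace transform of the wedge `[0, e.length] × sector e.lower e.upper`. -/
noncomputable def laplace (e : EdgeShape) (τ r : ℝ) : ℝ :=
  segmentLaplace τ e.length * e.transverseLaplace r

theorem transverseLaplace_pos {r : ℝ} (hr : e.upper < r) : 0 < e.transverseLaplace r :=
  div_pos (sub_pos.2 e.lower_lt_upper)
    (mul_pos (sub_pos.2 (e.lower_lt_upper.trans hr)) (sub_pos.2 hr))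

theorem laplace_nonneg (τ : ℝ) {r : ℝ} (hr : e.upper < r) : 0 ≤ e.laplace τ r :=
  mul_nonneg (segmentLaplace_nonneg τ e.length_nonneg) (transverseLaplace_pos hr).le

theorem length_eq_of_laplace_mul_eq (h_pos : 0 < e.length) (h_len : e.length = f.length)
    (h_sum : e'.length + f'.length = e.length + f.length)
    (h : ∀ᶠ r in atTop, ∀ τ, e.laplace τ r * f.laplace τ r = e'.laplace τ r * f'.laplace τ r) :
    e'.length = e.length ∧ f'.length = e.length := by
  obtain ⟨r, hr, he, hf⟩ :=
    (h.and ((eventually_gt_atTop e.upper).and (eventually_gt_atTop f.upper))).exists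
  refine eq_of_segmentLaplace_mul_eq (d := e'.transverseLaplace r * f'.transverseLaplace r) h_pos
    e'.length_nonneg f'.length_nonneg (h_sum.trans (by rw [h_len]))
    (mul_pos (transverseLaplace_pos he) (transverseLaplace_pos hf)).ne' fun τ ↦ ?_
  have := hr τ
  simp only [laplace, ← h_len] at this
  linear_combination this

theorem transverseLaplace_mul (e f : EdgeShape) (r : ℝ) :
    e.transverseLaplace r * f.transverseLaplace r =
      (e.upper - e.lower) * (f.upper - f.lower) /
        (({e.lower, f.lower} + {e.upper, f.upper} : Multiset ℝ).map (r - ·)).prod := by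
  simp only [transverseLaplace, div_mul_div_comm, Multiset.insert_eq_cons, Multiset.map_add,
    Multiset.map_cons, Multiset.map_singleton, Multiset.prod_add, Multiset.prod_cons,
    Multiset.prod_singleton]
  congr 1
  ring

/-- Two shapes whose ranges of slopes meet. -/
def Overlap (e f : EdgeShape) : Prop := e.lower ≤ f.upper ∧ f.lower ≤ e.upper

theorem Overlap.forall_le (h : Overlap e f) :
    ∀ a ∈ ({e.lower, f.lower} : Multiset ℝ), ∀ b ∈ ({e.upper, f.upper} : Multiset ℝ), a ≤ b := by
  simp [h.1, h.2, e.lower_lt_upper.le, f.lower_lt_upper.le]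

theorem slopes_eq_or_eq_swap (h : Overlap e f) (h' : Overlap e' f')
    (h_laplace : ∀ᶠ r in atTop, e.transverseLaplace r * f.transverseLaplace r =
      e'.transverseLaplace r * f'.transverseLaplace r) :
    (e.lower = e'.lower ∧ f.lower = f'.lower) ∧ (e.upper = e'.upper ∧ f.upper = f'.upper) ∨
      (e.lower = f'.lower ∧ f.lower = e'.lower) ∧ (e.upper = f'.upper ∧ f.upper = e'.upper) := by
  simp only [transverseLaplace_mul] at h_laplace
  obtain ⟨widths, slopes⟩ := eq_and_eq_of_eventually_div_prod_sub_eq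
    (mul_pos (sub_pos.2 e.lower_lt_upper) (sub_pos.2 f.lower_lt_upper)).ne' h_laplace
  obtain ⟨lowers, uppers⟩ :=
    eq_and_eq_of_add_eq_add_of_forall_le slopes h.forall_le h'.forall_le rfl
  rw [multiset_pair_eq_pair_iff] at lowers uppers
  -- If the lower slopes correspond directly and the upper ones crosswise, or vice versa, equality
  -- of the products of the widths forces one of the two pairs to consist of equal slopes.
  rcases lowers with ⟨hl₁, hl₂⟩ | ⟨hl₁, hl₂⟩ <;> rcases uppers with ⟨hu₁, hu₂⟩ | ⟨hu₁, hu₂⟩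
  · exact .inl ⟨⟨hl₁, hl₂⟩, hu₁, hu₂⟩
  · have : (e.lower - f.lower) * (e.upper - f.upper) = 0 := by
      rw [← hl₁, ← hl₂, ← hu₁, ← hu₂] at widths
      linear_combination widths
    grind
  · have : (e.lower - f.lower) * (e.upper - f.upper) = 0 := by
      rw [← hl₁, ← hl₂, ← hu₁, ← hu₂] at widths
      linear_combination widths
    grind
  · exact .inr ⟨⟨hl₁, hl₂⟩, hu₁, hu₂⟩

theorem eq_or_eq_swap_of_laplace_mul_eq (h : Overlap e f) (h' : Overlap e' f')
    (h_pos : 0 < e.length) (h_len : e.length = f.length)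
    (h_sum : e'.length + f'.length = e.length + f.length)
    (h_laplace : ∀ᶠ r in atTop, ∀ τ,
      e.laplace τ r * f.laplace τ r = e'.laplace τ r * f'.laplace τ r) :
    e = e' ∧ f = f' ∨ e = f' ∧ f = e' := by
  obtain ⟨he', hf'⟩ := length_eq_of_laplace_mul_eq h_pos h_len h_sum h_laplace
  have h_transverse : ∀ᶠ r in atTop, e.transverseLaplace r * f.transverseLaplace r =
      e'.transverseLaplace r * f'.transverseLaplace r := by
    filter_upwards [h_laplace] with r hr
    replace hr := hr 0
    simp only [laplace, segmentLaplace_zero, he', hf', ← h_len] at hr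
    refine mul_left_cancel₀ (pow_pos h_pos 2).ne' ?_
    linear_combination hr
  simp only [EdgeShape.ext_iff, he', hf', ← h_len, true_and]
  rcases slopes_eq_or_eq_swap h h' h_transverse with ⟨⟨_, _⟩, _, _⟩ | ⟨⟨_, _⟩, _, _⟩ <;> tauto

end EdgeShape

/-- The convex body `K` has an edge of shape `e` along the first axis, starting at the origin. -/
structure HasEdgeAtOrigin (K : Set (ℝ × ℝ × ℝ)) (e : EdgeShape) : Prop where
  convex : Convex ℝ K
  isCompact : IsCompact K
  axialSection_eq : axialSection K = Set.Icc 0 e.length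
  transverseCone_eq : transverseCone K = sector e.lower e.upper

/-- The exponential weight whose integrals over blown-up bodies converge to
`EdgeShape.laplace`. -/
noncomputable def edgeWeight (τ r : ℝ) (p : ℝ × ℝ × ℝ) : ENNReal :=
  ENNReal.ofReal (Real.exp (-(τ * p.1))) * ENNReal.ofReal (Real.exp (p.2.2 - r * p.2.1))

theorem measurable_edgeWeight (τ r : ℝ) : Measurable (edgeWeight τ r) := by
  unfold edgeWeight
  fun_prop

theorem edgeWeight_add (τ r : ℝ) (p q : ℝ × ℝ × ℝ) :
    edgeWeight τ r (p + q) = edgeWeight τ r p * edgeWeight τ r q := by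
  simp only [edgeWeight, ← ENNReal.ofReal_mul (Real.exp_pos _).le, ← Real.exp_add, Prod.fst_add,
    Prod.snd_add]
  congr 2
  ring

namespace HasEdgeAtOrigin

variable {K L : Set (ℝ × ℝ × ℝ)} {e f : EdgeShape}

theorem zero_mem (h : HasEdgeAtOrigin K e) : (0 : ℝ × ℝ × ℝ) ∈ K := by
  change (0 : ℝ) ∈ axialSection K
  rw [h.axialSection_eq]
  exact Set.left_mem_Icc.2 e.length_nonneg

theorem snd_mem_sector (h : HasEdgeAtOrigin K e) {p : ℝ × ℝ × ℝ} (hp : p ∈ K) :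
    p.2 ∈ sector e.lower e.upper :=
  h.transverseCone_eq ▸ ⟨1, one_pos, p.1, by rwa [one_smul]⟩

theorem exists_mem_pos (h : HasEdgeAtOrigin K e) : ∃ p ∈ K, 0 < p.2.1 := by
  have ray_mem : ((1, e.lower) : ℝ × ℝ) ∈ transverseCone K := by
    rw [h.transverseCone_eq]
    simpa [sector] using e.lower_lt_upper.le
  obtain ⟨κ, hκ, s, hs⟩ := ray_mem
  exact ⟨_, hs, by simpa using hκ⟩

-- The reflection swaps the two bodies, so its value at the origin lies over both sectors.
theorem overlap_of_reflection (hK : HasEdgeAtOrigin K e) (hL : HasEdgeAtOrigin L f)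
    {k₀ : ℝ × ℝ × ℝ} (h : ∀ k, k ∈ K ↔ k₀ - k ∈ L) : EdgeShape.Overlap e f := by
  obtain ⟨-, hα, hβ⟩ := hK.snd_mem_sector ((h k₀).2 (by simpa using hL.zero_mem))
  obtain ⟨-, hγ, hδ⟩ := hL.snd_mem_sector (sub_zero k₀ ▸ (h 0).1 hK.zero_mem)
  obtain ⟨p, hp, hp_pos⟩ := hK.exists_mem_pos
  have k₀_pos : 0 < k₀.2.1 :=
    hp_pos.trans_le (sub_nonneg.1 (hL.snd_mem_sector ((h p).1 hp)).1)
  exact ⟨le_of_mul_le_mul_right (hα.trans hδ) k₀_pos, le_of_mul_le_mul_right (hγ.trans hβ) k₀_pos⟩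

theorem tendsto_laplace (h : HasEdgeAtOrigin K e) (τ : ℝ) {r : ℝ} (hr : e.upper < r) :
    Tendsto (fun ε ↦ ∫⁻ p in blowUp K ε, edgeWeight τ r p ∂(volume : Measure ℝ).prod volume)
      (𝓝[>] 0) (𝓝 (ENNReal.ofReal (e.laplace τ r))) := by
  have section_integral :
      ∫⁻ s in axialSection K, ENNReal.ofReal (Real.exp (-(τ * s))) =
        ENNReal.ofReal (segmentLaplace τ e.length) := by
    rw [h.axialSection_eq, setLIntegral_exp_eq_segmentLaplace τ e.length_nonneg]
  have cone_integral :
      ∫⁻ w in transverseCone K, ENNReal.ofReal (Real.exp (w.2 - r * w.1)) =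
        ENNReal.ofReal (e.transverseLaplace r) := by
    rw [h.transverseCone_eq, setLIntegral_sector_exp e.lower_lt_upper.le hr,
      EdgeShape.transverseLaplace]
  have image_integral : ∫⁻ s in Prod.fst '' K, ENNReal.ofReal (Real.exp (-(τ * s))) ≠ ⊤ :=
    (setLIntegral_lt_top_of_isCompact (h.isCompact.image continuous_fst).measure_ne_top
      (h.isCompact.image continuous_fst)
      (f := fun s ↦ (Real.exp (-(τ * s))).toNNReal) (by fun_prop)).ne
  have := tendsto_setLIntegral_blowUp h.convex h.isCompact
    (h.transverseCone_eq ▸ measurableSet_sector _ _) (by fun_prop) (by fun_prop) image_integral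
    (cone_integral ▸ ENNReal.ofReal_ne_top)
  rwa [section_integral, cone_integral,
    ← ENNReal.ofReal_mul (segmentLaplace_nonneg τ e.length_nonneg)] at this

end HasEdgeAtOrigin

theorem exists_blowUp_chart_eq {V W E : Type*} [NormedAddCommGroup V] [NormedSpace ℝ V]
    [NormedAddCommGroup W] [NormedSpace ℝ W] [NormedAddCommGroup E] [NormedSpace ℝ E]
    (ψ : (V × W) ≃L[ℝ] E) {ε : ℝ} (hε : ε ≠ 0) :
    ∃ φ : (V × W) ≃L[ℝ] E, ∀ a P, blowUp (chart ψ a P) ε = chart φ a P :=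
  ⟨((ContinuousLinearEquiv.refl ℝ V).prodCongr
    (ContinuousLinearEquiv.smulLeft (Units.mk0 ε hε))).trans ψ, fun _ _ ↦ rfl⟩

theorem eventually_laplace_mul_eq_of_covariogram_eq {P P' : Set ℝ³} (hP : IsCompact P)
    (hP' : IsCompact P') (hcov : covariogram P = covariogram P') {a c a' c' : ℝ³}
    (hac : a + c = a' + c') {ψ : (ℝ × ℝ × ℝ) ≃L[ℝ] ℝ³} {e f e' f' : EdgeShape}
    (he : HasEdgeAtOrigin (chart ψ a P) e) (hf : HasEdgeAtOrigin (chart ψ c (-P)) f)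
    (he' : HasEdgeAtOrigin (chart ψ a' P') e') (hf' : HasEdgeAtOrigin (chart ψ c' (-P')) f') :
    ∀ᶠ r in atTop, ∀ τ,
      e.laplace τ r * f.laplace τ r = e'.laplace τ r * f'.laplace τ r := by
  filter_upwards [eventually_gt_atTop e.upper, eventually_gt_atTop f.upper,
    eventually_gt_atTop e'.upper, eventually_gt_atTop f'.upper] with r hre hrf hre' hrf' τ
  have lim := ENNReal.Tendsto.mul (he.tendsto_laplace τ hre) (.inr ENNReal.ofReal_ne_top)
    (hf.tendsto_laplace τ hrf) (.inr ENNReal.ofReal_ne_top)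
  have lim' := ENNReal.Tendsto.mul (he'.tendsto_laplace τ hre') (.inr ENNReal.ofReal_ne_top)
    (hf'.tendsto_laplace τ hrf') (.inr ENNReal.ofReal_ne_top)
  have limits_eq := tendsto_nhds_unique lim <| lim'.congr' <| by
    filter_upwards [self_mem_nhdsWithin] with ε hε
    obtain ⟨φ, hφ⟩ := exists_blowUp_chart_eq ψ (ne_of_gt hε)
    simp only [hφ]
    exact (laplace_chart_mul_eq_of_covariogram_eq hP hP' hcov hac φ (measurable_edgeWeight τ r)
      (edgeWeight_add τ r)).symm
  rwa [← ENNReal.ofReal_mul (EdgeShape.laplace_nonneg τ hre),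
    ← ENNReal.ofReal_mul (EdgeShape.laplace_nonneg τ hre'), ENNReal.ofReal_eq_ofReal_iff
      (mul_nonneg (EdgeShape.laplace_nonneg τ hre) (EdgeShape.laplace_nonneg τ hrf))
      (mul_nonneg (EdgeShape.laplace_nonneg τ hre') (EdgeShape.laplace_nonneg τ hrf'))]
    at limits_eq

end EdgeShapes

section Segments

theorem hausdorffMeasure_neg {E : Type*} [NormedAddCommGroup E] [MeasurableSpace E] [BorelSpace E]
    (d : ℝ) (s : Set E) : μH[d] (-s) = μH[d] s := by
  rw [← Set.image_neg_eq_neg]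
  exact (IsometryEquiv.neg E).hausdorffMeasure_image d s

variable {E : Type*} [NormedAddCommGroup E] [NormedSpace ℝ E]

theorem vectorSpan_neg (s : Set E) : vectorSpan ℝ (-s) = vectorSpan ℝ s :=
  congrArg (Submodule.span ℝ) (neg_sub_neg s s)

theorem vectorSpan_le_vectorSpan_add_left (s : Set E) {t : Set E} (ht : t.Nonempty) :
    vectorSpan ℝ s ≤ vectorSpan ℝ (s + t) := by
  obtain ⟨y, hy⟩ := ht
  rw [← vectorSpan_vadd (k := ℝ) s y]
  refine vectorSpan_mono ℝ ?_
  rintro _ ⟨x, hx, rfl⟩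
  exact ⟨x, hx, y, hy, add_comm x y⟩

theorem intrinsicInterior_neg (s : Set E) :
    intrinsicInterior ℝ (-s) = -intrinsicInterior ℝ s := by
  rw [← Set.image_neg_eq_neg, ← Set.image_neg_eq_neg]
  exact AffineIsometry.intrinsicInterior_image
    (LinearIsometryEquiv.neg ℝ (E := E)).toLinearIsometry.toAffineIsometry s

/-- The arc length parametrization of the line through `a` in the unit direction `u`. -/
def unitSpeedLine (a : E) {u : E} (hu : ‖u‖ = 1) : ℝ →ᵃⁱ[ℝ] E where
  toFun s := a + s • u
  linear := LinearMap.toSpanSingleton ℝ E u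
  map_vadd' p v := by
    simp only [vadd_eq_add, LinearMap.toSpanSingleton_apply]
    module
  norm_map x := by simp [norm_smul, hu]

/-- The segment from `a` to `a + l • u`, of length `l` when `u` is a unit vector and `0 ≤ l`. -/
def directedSegment (u a : E) (l : ℝ) : Set E := (fun s : ℝ ↦ a + s • u) '' Set.Icc 0 l

variable {u a c : E} {l m : ℝ}

theorem directedSegment_eq_segment (hl : 0 ≤ l) :
    directedSegment u a l = segment ℝ a (a + l • u) := by
  have := image_segment ℝ (AffineMap.lineMap (k := ℝ) a (a + u)) 0 l
  rw [segment_eq_Icc hl] at this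
  simpa [directedSegment, AffineMap.lineMap_apply, add_comm] using this

theorem vectorSpan_directedSegment (hl : 0 < l) :
    vectorSpan ℝ (directedSegment u a l) = Submodule.span ℝ {u} := by
  rw [directedSegment_eq_segment hl.le, vectorSpan_segment, vsub_eq_sub, add_sub_cancel_left,
    Submodule.span_singleton_smul_eq hl.ne'.isUnit]

variable [MeasurableSpace E] [BorelSpace E] in
theorem hausdorffMeasure_directedSegment (hu : ‖u‖ = 1) (a : E) (l : ℝ) :
    μH[1] (directedSegment u a l) = ENNReal.ofReal l := by
  have := (unitSpeedLine a hu).isometry.hausdorffMeasure_image (.inl zero_le_one) (Set.Icc 0 l)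
  rwa [hausdorffMeasure_real, Real.volume_Icc, sub_zero] at this

theorem add_half_smul_mem_intrinsicInterior_directedSegment (hu : ‖u‖ = 1) (a : E) (hl : 0 < l) :
    a + (l / 2) • u ∈ intrinsicInterior ℝ (directedSegment u a l) := by
  have half_mem : l / 2 ∈ interior (Set.Icc 0 l) :=
    interior_Icc (a := (0 : ℝ)) ▸ ⟨half_pos hl, half_lt_self hl⟩
  have := Set.mem_image_of_mem (unitSpeedLine a hu)
    (interior_subset_intrinsicInterior (𝕜 := ℝ) half_mem)
  rwa [← AffineIsometry.intrinsicInterior_image] at this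

theorem directedSegment_add (hl : 0 ≤ l) (hm : 0 ≤ m) :
    directedSegment u a l + directedSegment u c m = directedSegment u (a + c) (l + m) := by
  apply Set.Subset.antisymm
  · rintro _ ⟨_, ⟨s, hs, rfl⟩, _, ⟨t, ht, rfl⟩, rfl⟩
    exact ⟨s + t, ⟨add_nonneg hs.1 ht.1, add_le_add hs.2 ht.2⟩, by module⟩
  · rintro _ ⟨s, hs, rfl⟩
    refine ⟨_, ⟨min s l, ⟨le_min hs.1 hl, min_le_right s l⟩, rfl⟩, _,
      ⟨s - min s l, ⟨sub_nonneg.2 (min_le_left s l), ?_⟩, rfl⟩, by module⟩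
    rcases le_total s l with h | h
    · simpa [h] using hm
    · simpa [h, sub_le_iff_le_add, add_comm m] using hs.2

theorem exists_eq_add_smul_of_directedSegment_subset (hu : u ≠ 0) (hl : 0 ≤ l)
    (h : directedSegment u a l ⊆ directedSegment u c m) :
    ∃ s, 0 ≤ s ∧ a = c + s • u ∧ s + l ≤ m := by
  obtain ⟨s, hs, hsa⟩ := h ⟨0, ⟨le_rfl, hl⟩, rfl⟩
  obtain ⟨t, ht, hta⟩ := h ⟨l, ⟨hl, le_rfl⟩, rfl⟩
  simp only [zero_smul, add_zero] at hsa hta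
  refine ⟨s, hs.1, hsa.symm, ?_⟩
  rw [← hsa, add_assoc, ← add_smul] at hta
  rw [← smul_left_injective ℝ hu (add_left_cancel hta)]
  exact ht.2

theorem directedSegment_inj (hu : u ≠ 0) (hl : 0 ≤ l) (hm : 0 ≤ m)
    (h : directedSegment u a l = directedSegment u c m) : a = c ∧ l = m := by
  obtain ⟨s, hs, rfl, hsl⟩ := exists_eq_add_smul_of_directedSegment_subset hu hl h.subset
  obtain ⟨t, ht, -, htm⟩ := exists_eq_add_smul_of_directedSegment_subset hu hm h.superset
  obtain rfl : s = 0 := by linarith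
  exact ⟨by rw [zero_smul, add_zero], by linarith⟩

theorem exists_eq_directedSegment {F : Set E} (hconv : Convex ℝ F) (hcomp : IsCompact F)
    (hne : F.Nonempty) (hu : ‖u‖ = 1) (hspan : vectorSpan ℝ F ≤ Submodule.span ℝ {u}) :
    ∃ a l, 0 ≤ l ∧ F = directedSegment u a l := by
  obtain ⟨x₀, hx₀⟩ := hne
  let γ := unitSpeedLine x₀ hu
  have image_preimage : γ '' (γ ⁻¹' F) = F := by
    refine Set.image_preimage_eq_of_subset fun x hx ↦ ?_
    obtain ⟨s, hs⟩ := Submodule.mem_span_singleton.1 (hspan (vsub_mem_vectorSpan ℝ hx hx₀))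
    exact ⟨s, (congrArg (x₀ + ·) hs).trans (add_sub_cancel x₀ x)⟩
  have preimage_convex : Convex ℝ (γ ⁻¹' F) := hconv.affine_preimage γ.toAffineMap
  have preimage_compact : IsCompact (γ ⁻¹' F) :=
    γ.isometry.isClosedEmbedding.isCompact_preimage hcomp
  have preimage_nonempty : (γ ⁻¹' F).Nonempty :=
    Set.Nonempty.of_image (f := γ) (by rw [image_preimage]; exact ⟨x₀, hx₀⟩)
  obtain ⟨p, q, preimage_eq⟩ : ∃ p q, γ ⁻¹' F = Set.Icc p q :=
    ⟨_, _, eq_Icc_of_connected_compact ⟨preimage_nonempty, preimage_convex.isPreconnected⟩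
      preimage_compact⟩
  have hpq : p ≤ q := Set.nonempty_Icc.1 (preimage_eq ▸ preimage_nonempty)
  have reparametrize (s : ℝ) : x₀ + p • u + s • u = γ (p + s) := by
    rw [add_assoc, ← add_smul]
    rfl
  refine ⟨x₀ + p • u, q - p, sub_nonneg.2 hpq, ?_⟩
  rw [directedSegment, ← image_preimage, preimage_eq]
  simp_rw [reparametrize]
  rw [← Set.image_image γ (p + ·), Set.image_const_add_Icc, add_zero, add_sub_cancel]

end Segments

section Polytopes

variable {P R F : Set ℝ³} {w : ℝ³}

theorem IsPolytope.isCompact (hP : IsPolytope P) : IsCompact P := by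
  obtain ⟨S, rfl⟩ := hP
  exact S.finite_toSet.isCompact_convexHull ℝ

theorem IsPolytope.convex (hP : IsPolytope P) : Convex ℝ P := by
  obtain ⟨S, rfl⟩ := hP
  exact convex_convexHull ℝ _

theorem IsPolytope.neg (hP : IsPolytope P) : IsPolytope (-P) := by
  classical
  obtain ⟨S, rfl⟩ := hP
  exact ⟨-S, by rw [Finset.coe_neg, convexHull_neg]⟩

theorem mem_exposedFace {x : ℝ³} :
    x ∈ exposedFace P w ↔ x ∈ P ∧ ∀ y ∈ P, inner ℝ w y ≤ inner ℝ w x := Iff.rfl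

theorem isExposed_exposedFace (P : Set ℝ³) (w : ℝ³) : IsExposed ℝ P (exposedFace P w) :=
  fun _ ↦ ⟨innerSL ℝ w, rfl⟩

theorem exposedFace_nonempty (hP : IsCompact P) (hne : P.Nonempty) (w : ℝ³) :
    (exposedFace P w).Nonempty := by
  obtain ⟨x, hx, hmax⟩ := hP.exists_isMaxOn hne (f := inner ℝ w) (by fun_prop)
  exact ⟨x, hx, hmax⟩

theorem inner_eq_of_mem_exposedFace {x y : ℝ³} (hx : x ∈ exposedFace P w)
    (hy : y ∈ exposedFace P w) : inner ℝ w x = inner ℝ w y :=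
  le_antisymm (hy.2 x hx.1) (hx.2 y hy.1)

theorem inner_eq_zero_of_mem_vectorSpan_exposedFace {v : ℝ³}
    (hv : v ∈ vectorSpan ℝ (exposedFace P w)) : inner ℝ w v = 0 := by
  have : vectorSpan ℝ (exposedFace P w) ≤ LinearMap.ker (innerSL ℝ w).toLinearMap := by
    rw [vectorSpan_def, Submodule.span_le]
    rintro _ ⟨x, hx, y, hy, rfl⟩
    simpa [inner_sub_right, sub_eq_zero] using inner_eq_of_mem_exposedFace hx hy
  exact this hv

theorem exposedFace_add (P R : Set ℝ³) (w : ℝ³) :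
    exposedFace (P + R) w = exposedFace P w + exposedFace R w := by
  apply Set.Subset.antisymm
  · rintro _ ⟨⟨p, hp, r, hr, rfl⟩, h⟩
    simp only [inner_add_right] at h
    refine ⟨p, ⟨hp, fun y hy ↦ ?_⟩, r, ⟨hr, fun y hy ↦ ?_⟩, rfl⟩
    · simpa [inner_add_right] using h _ (Set.add_mem_add hy hr)
    · simpa [inner_add_right] using h _ (Set.add_mem_add hp hy)
  · rintro _ ⟨p, hp, r, hr, rfl⟩
    refine ⟨Set.add_mem_add hp.1 hr.1, ?_⟩
    rintro _ ⟨y, hy, z, hz, rfl⟩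
    simpa only [inner_add_right] using add_le_add (hp.2 y hy) (hr.2 z hz)

theorem exposedFace_neg (P : Set ℝ³) (w : ℝ³) : exposedFace (-P) w = -exposedFace P (-w) := by
  ext x
  simp only [mem_exposedFace, Set.mem_neg, inner_neg_left, inner_neg_right, neg_neg]
  exact and_congr_right fun _ ↦ ⟨fun h y hy ↦ by simpa using h (-y) (by simpa using hy),
    fun h y hy ↦ by simpa using h (-y) hy⟩

theorem supportCone_neg (P F : Set ℝ³) : supportCone (-P) (-F) = -supportCone P F := by
  have subset (P F : Set ℝ³) : supportCone (-P) (-F) ⊆ -supportCone P F := by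
    rintro _ ⟨x, hx, y, hy, μ, hμ, rfl⟩
    rw [intrinsicInterior_neg] at hx
    exact ⟨-x, hx, -y, hy, μ, hμ, by module⟩
  refine (subset P F).antisymm ?_
  rw [Set.neg_subset]
  simpa only [neg_neg] using subset (-P) (-F)

theorem vectorSpan_exposedFace_neg (P : Set ℝ³) (w : ℝ³) :
    vectorSpan ℝ (exposedFace (-P) w) = vectorSpan ℝ (exposedFace P (-w)) := by
  rw [exposedFace_neg, vectorSpan_neg]

theorem hausdorffMeasure_exposedFace_neg (d : ℝ) (P : Set ℝ³) (w : ℝ³) :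
    μH[d] (exposedFace (-P) w) = μH[d] (exposedFace P (-w)) := by
  rw [exposedFace_neg, hausdorffMeasure_neg]

theorem supportCone_exposedFace_neg (P : Set ℝ³) (w : ℝ³) :
    supportCone (-P) (exposedFace (-P) w) = -supportCone P (exposedFace P (-w)) := by
  rw [exposedFace_neg, supportCone_neg]

end Polytopes

section Frames

theorem exists_norm_eq_one_and_eq_span {E : Type*} [NormedAddCommGroup E] [NormedSpace ℝ E]
    {V : Submodule ℝ E} (hV : Module.finrank ℝ V = 1) :
    ∃ u, ‖u‖ = 1 ∧ V = Submodule.span ℝ {u} := by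
  obtain ⟨v, hv, rfl⟩ : ∃ v ≠ 0, V = Submodule.span ℝ {v} := by
    obtain ⟨⟨v, hvV⟩, hv, span_eq⟩ := finrank_eq_one_iff'.1 hV
    refine ⟨v, fun h ↦ hv (Subtype.ext h), le_antisymm (fun x hx ↦ ?_) (by simpa using hvV)⟩
    obtain ⟨c, hc⟩ := span_eq ⟨x, hx⟩
    exact Submodule.mem_span_singleton.2 ⟨c, congrArg Subtype.val hc⟩
  refine ⟨(‖v‖⁻¹ : ℝ) • v, norm_smul_inv_norm hv, ?_⟩
  rw [Submodule.span_singleton_smul_eq (inv_ne_zero (norm_ne_zero_iff.2 hv)).isUnit]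

/-- Linear coordinates of `ℝ³` adapted to an edge exposed in direction `w`: the first axis is
parametrized by arc length, the second coordinate is the depth below the supporting plane. -/
structure IsEdgeFrame (w : ℝ³) (ψ : (ℝ × ℝ × ℝ) ≃L[ℝ] ℝ³) : Prop where
  norm_axis : ‖ψ (1, 0)‖ = 1
  inner_eq : ∀ k, inner ℝ w (ψ k) = -k.2.1

theorem exists_orthonormalBasis_eq_and_eq {u v : ℝ³} (hu : ‖u‖ = 1) (hv : ‖v‖ = 1)
    (huv : inner ℝ u v = 0) : ∃ b : OrthonormalBasis (Fin 3) ℝ ℝ³, b 0 = u ∧ b 1 = v := by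
  have orthonormal : Orthonormal ℝ (({0, 1} : Set (Fin 3)).domRestrict ![u, v, 0]) := by
    refine ⟨?_, ?_⟩
    · rintro ⟨i, rfl | rfl⟩ <;> simpa
    · rintro ⟨i, rfl | rfl⟩ ⟨j, rfl | rfl⟩ hij
      · exact absurd rfl hij
      · simpa using huv
      · simpa [real_inner_comm] using huv
      · exact absurd rfl hij
  obtain ⟨b, hb⟩ := orthonormal.exists_orthonormalBasis_extension_of_card_eq (by simp)
  exact ⟨b, by simpa using hb 0 (by simp), by simpa using hb 1 (by simp)⟩

theorem exists_isEdgeFrame {w u : ℝ³} (hw : ‖w‖ = 1) (hu : ‖u‖ = 1) (hwu : inner ℝ w u = 0) :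
    ∃ ψ, IsEdgeFrame w ψ ∧ ψ (1, 0) = u := by
  obtain ⟨b, rfl, hb⟩ := exists_orthonormalBasis_eq_and_eq hu (norm_neg w ▸ hw)
    (by rw [inner_neg_right, real_inner_comm, hwu, neg_zero])
  obtain rfl : w = -b 1 := by rw [hb, neg_neg]
  let φ : (ℝ × ℝ × ℝ) →ₗ[ℝ] ℝ³ := (LinearMap.toSpanSingleton ℝ ℝ³ (b 0)).coprod
    ((LinearMap.toSpanSingleton ℝ ℝ³ (b 1)).coprod (LinearMap.toSpanSingleton ℝ ℝ³ (b 2)))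
  have φ_apply (k : ℝ × ℝ × ℝ) : φ k = ∑ i, ![k.1, k.2.1, k.2.2] i • b i := by
    simp [φ, Fin.sum_univ_three, add_assoc]
  have inner_φ (i : Fin 3) (k : ℝ × ℝ × ℝ) : inner ℝ (b i) (φ k) = ![k.1, k.2.1, k.2.2] i := by
    rw [φ_apply, b.orthonormal.inner_right_fintype]
  have φ_injective : Function.Injective φ := fun k k' h ↦ by
    have coordinates_eq (i : Fin 3) : ![k.1, k.2.1, k.2.2] i = ![k'.1, k'.2.1, k'.2.2] i := by
      rw [← inner_φ, h, inner_φ]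
    exact Prod.ext (coordinates_eq 0) (Prod.ext (coordinates_eq 1) (coordinates_eq 2))
  have φ_axis : φ (1, 0) = b 0 := by simp [φ]
  refine ⟨(φ.linearEquivOfInjective φ_injective (by simp)).toContinuousLinearEquiv,
    ⟨(congrArg norm φ_axis).trans hu, fun k ↦ ?_⟩, φ_axis⟩
  exact (inner_neg_left _ _).trans (congrArg Neg.neg (inner_φ 1 k))

end Frames

section ExposedEdges

variable {P : Set ℝ³} {w a c : ℝ³} {ψ : (ℝ × ℝ × ℝ) ≃L[ℝ] ℝ³} {e f : EdgeShape}

/-- The face of `P` exposed in direction `w` is the segment of length `e.length` that starts at `a`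
in the direction of the first axis of the frame `ψ`, and `P` has the shape `e` at this face. -/
structure HasExposedEdge (ψ : (ℝ × ℝ × ℝ) ≃L[ℝ] ℝ³) (w : ℝ³) (P : Set ℝ³) (a : ℝ³)
    (e : EdgeShape) : Prop where
  exposedFace_eq : exposedFace P w = directedSegment (ψ (1, 0)) a e.length
  hasEdgeAtOrigin : HasEdgeAtOrigin (chart ψ a P) e

theorem map_fst_eq_smul (ψ : (ℝ × ℝ × ℝ) ≃L[ℝ] ℝ³) (s : ℝ) : ψ (s, 0) = s • ψ (1, 0) := by
  rw [← map_smul, Prod.smul_mk, smul_eq_mul, mul_one, smul_zero]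

namespace IsEdgeFrame

theorem axis_ne_zero (hψ : IsEdgeFrame w ψ) : ψ (1, 0) ≠ 0 :=
  norm_ne_zero_iff.1 (by rw [hψ.norm_axis]; exact one_ne_zero)

theorem add_axis_mem_exposedFace_iff (hψ : IsEdgeFrame w ψ) (ha : a ∈ exposedFace P w) {s : ℝ} :
    a + ψ (s, 0) ∈ exposedFace P w ↔ a + ψ (s, 0) ∈ P := by
  simpa [mem_exposedFace, inner_add_right, hψ.inner_eq] using fun _ ↦ ha.2

theorem axialSection_chart_eq (hψ : IsEdgeFrame w ψ) {l : ℝ} (hl : 0 ≤ l)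
    (h : exposedFace P w = directedSegment (ψ (1, 0)) a l) :
    axialSection (chart ψ a P) = Set.Icc 0 l := by
  have line_injective : Function.Injective fun s : ℝ ↦ a + s • ψ (1, 0) :=
    (add_right_injective a).comp (smul_left_injective ℝ hψ.axis_ne_zero)
  have ha : a ∈ exposedFace P w := h ▸ ⟨0, ⟨le_rfl, hl⟩, by simp⟩
  ext s
  change a + ψ (s, 0) ∈ P ↔ _
  rw [← hψ.add_axis_mem_exposedFace_iff ha, h, map_fst_eq_smul ψ s]
  exact line_injective.mem_set_image

theorem depth_nonneg (hψ : IsEdgeFrame w ψ) (ha : a ∈ exposedFace P w) {k : ℝ × ℝ × ℝ}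
    (hk : k ∈ chart ψ a P) : 0 ≤ k.2.1 := by
  simpa [inner_add_right, hψ.inner_eq] using ha.2 _ hk

theorem snd_eq_zero_of_depth_eq_zero (hψ : IsEdgeFrame w ψ) (ha : a ∈ exposedFace P w)
    (hspan : vectorSpan ℝ (exposedFace P w) ≤ Submodule.span ℝ {ψ (1, 0)}) {k : ℝ × ℝ × ℝ}
    (hk : k ∈ chart ψ a P) (hk₀ : k.2.1 = 0) : k.2 = 0 := by
  have mem_face : a + ψ k ∈ exposedFace P w :=
    ⟨hk, fun y hy ↦ by simpa [inner_add_right, hψ.inner_eq, hk₀] using ha.2 y hy⟩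
  obtain ⟨s, hs⟩ := Submodule.mem_span_singleton.1 (hspan (vsub_mem_vectorSpan ℝ mem_face ha))
  rw [vsub_eq_sub, add_sub_cancel_left, ← map_fst_eq_smul] at hs
  rw [← ψ.injective hs]

theorem exists_transverseCone_chart_eq_sector (hψ : IsEdgeFrame w ψ) (hP : IsPolytope P)
    (hint : (interior P).Nonempty) (ha : a ∈ exposedFace P w)
    (hspan : vectorSpan ℝ (exposedFace P w) ≤ Submodule.span ℝ {ψ (1, 0)}) :
    ∃ α β, α < β ∧ transverseCone (chart ψ a P) = sector α β := by
  obtain ⟨S, hS⟩ := hP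
  have projection_eq : Prod.snd '' chart ψ a P = convexHull ℝ (Prod.snd '' chart ψ a S) := by
    rw [hS, chart_convexHull]
    exact (LinearMap.snd ℝ ℝ (ℝ × ℝ)).image_convexHull _
  have vertex_mem {k : ℝ × ℝ × ℝ} (hk : k ∈ chart ψ a S) : k ∈ chart ψ a P :=
    hS ▸ subset_convexHull ℝ _ hk
  have vertices_finite : (chart ψ a (S : Set ℝ³)).Finite :=
    S.finite_toSet.preimage ((add_right_injective a).comp ψ.injective).injOn
  have interior_nonempty : (interior (Prod.snd '' chart ψ a P)).Nonempty := by
    refine Set.Nonempty.mono (isOpenMap_snd.image_interior_subset _) (.image _ ?_)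
    rw [chart_interior]
    exact hint.preimage ((AddAction.surjective a).comp ψ.surjective)
  obtain ⟨α, β, hαβ, cone_eq⟩ := exists_coneHull_eq_sector (vertices_finite.image Prod.snd)
    (Set.forall_mem_image.2 fun k hk ↦ hψ.depth_nonneg ha (vertex_mem hk))
    (Set.forall_mem_image.2 fun k hk ↦ hψ.snd_eq_zero_of_depth_eq_zero ha hspan (vertex_mem hk))
    (projection_eq ▸ ⟨0, by simpa [mem_chart] using ha.1, rfl⟩) (projection_eq ▸ interior_nonempty)
  refine ⟨α, β, hαβ, cone_eq ▸ ?_⟩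
  rw [← projection_eq]
  ext v
  simp [transverseCone]

theorem exists_hasExposedEdge (hψ : IsEdgeFrame w ψ) (hP : IsPolytope P)
    (hint : (interior P).Nonempty)
    (hspan : vectorSpan ℝ (exposedFace P w) ≤ Submodule.span ℝ {ψ (1, 0)}) :
    ∃ a e, HasExposedEdge ψ w P a e := by
  have exposed := isExposed_exposedFace P w
  obtain ⟨a, l, hl, face_eq⟩ := exists_eq_directedSegment (exposed.convex hP.convex)
    (exposed.isCompact hP.isCompact)
    (exposedFace_nonempty hP.isCompact (hint.mono interior_subset) w) hψ.norm_axis hspan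
  have ha : a ∈ exposedFace P w := face_eq ▸ ⟨0, ⟨le_rfl, hl⟩, by simp⟩
  obtain ⟨α, β, hαβ, cone_eq⟩ := hψ.exists_transverseCone_chart_eq_sector hP hint ha hspan
  exact ⟨a, ⟨l, α, β, hl, hαβ⟩, face_eq, convex_chart ψ a hP.convex,
    isCompact_chart ψ a hP.isCompact, hψ.axialSection_chart_eq hl face_eq, cone_eq⟩

end IsEdgeFrame

namespace HasExposedEdge

theorem vectorSpan_eq (h : HasExposedEdge ψ w P a e) (he : 0 < e.length) :
    vectorSpan ℝ (exposedFace P w) = Submodule.span ℝ {ψ (1, 0)} := by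
  rw [h.exposedFace_eq, vectorSpan_directedSegment he]

theorem length_pos (h : HasExposedEdge ψ w P a e)
    (hrank : Module.finrank ℝ (vectorSpan ℝ (exposedFace P w)) = 1) : 0 < e.length := by
  refine e.length_nonneg.lt_of_ne fun length_eq ↦ ?_
  have face_singleton : exposedFace P w = {a} := by
    simp [h.exposedFace_eq, directedSegment, ← length_eq]
  rw [face_singleton, vectorSpan_singleton, finrank_bot] at hrank
  exact zero_ne_one hrank

theorem hausdorffMeasure_eq (hψ : IsEdgeFrame w ψ) (h : HasExposedEdge ψ w P a e) :
    μH[1] (exposedFace P w) = ENNReal.ofReal e.length := by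
  rw [h.exposedFace_eq, hausdorffMeasure_directedSegment hψ.norm_axis]

theorem supportCone_eq (hψ : IsEdgeFrame w ψ) (h : HasExposedEdge ψ w P a e)
    (he : 0 < e.length) :
    supportCone P (exposedFace P w) = ψ '' (Prod.snd ⁻¹' sector e.lower e.upper) := by
  rw [h.exposedFace_eq]
  apply Set.Subset.antisymm
  · rintro _ ⟨x, hx, y, hy, μ, hμ, rfl⟩
    obtain ⟨s, -, rfl⟩ := intrinsicInterior_subset hx
    have point_mem : ψ.symm (y - a) ∈ chart ψ a P := by simpa [mem_chart] using hy
    refine ⟨μ • (ψ.symm (y - a) - (s, 0)), ?_, ?_⟩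
    · rcases hμ.eq_or_lt with rfl | μ_pos
      · simpa using zero_mem_sector e.lower e.upper
      · refine (smul_mem_sector_iff μ_pos).2 ?_
        simpa using h.hasEdgeAtOrigin.snd_mem_sector point_mem
    · rw [map_smul, map_sub, ψ.apply_symm_apply, map_fst_eq_smul, sub_sub]
  · rintro _ ⟨⟨s, v⟩, hv, rfl⟩
    have half_mem : e.length / 2 ∈ interior (axialSection (chart ψ a P)) := by
      rw [h.hasEdgeAtOrigin.axialSection_eq, interior_Icc]
      exact ⟨half_pos he, half_lt_self he⟩
    obtain ⟨ε, hε, ε_pos⟩ := ((eventually_add_smul_mem_of_convex h.hasEdgeAtOrigin.convex half_mem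
      (h.hasEdgeAtOrigin.transverseCone_eq ▸ hv) s).and self_mem_nhdsWithin).exists
    refine ⟨_, add_half_smul_mem_intrinsicInterior_directedSegment hψ.norm_axis a he, _, hε, ε⁻¹,
      inv_nonneg.2 (le_of_lt ε_pos), ?_⟩
    rw [← map_fst_eq_smul, add_sub_add_left_eq_sub, ← map_sub, Prod.mk_sub_mk, add_sub_cancel_left,
      sub_zero, ← Prod.smul_mk, map_smul, inv_smul_smul₀ (ne_of_gt ε_pos)]

theorem exposedFace_add_neg (h : HasExposedEdge ψ w P a e) (h' : HasExposedEdge ψ w (-P) c f) :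
    exposedFace (P + -P) w = directedSegment (ψ (1, 0)) (a + c) (e.length + f.length) := by
  rw [exposedFace_add, h.exposedFace_eq, h'.exposedFace_eq,
    directedSegment_add e.length_nonneg f.length_nonneg]

theorem overlap (h : HasExposedEdge ψ w P a e) (h' : HasExposedEdge ψ w (-P) c f) :
    EdgeShape.Overlap e f := by
  refine h.hasEdgeAtOrigin.overlap_of_reflection h'.hasEdgeAtOrigin (k₀ := ψ.symm (-(a + c)))
    fun k ↦ ?_
  rw [mem_chart, mem_chart, Set.mem_neg, map_sub, ψ.apply_symm_apply]
  congr! 1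
  abel

end HasExposedEdge

end ExposedEdges

section DifferenceBody

variable {P P' : Set ℝ³}

theorem interior_neg_nonempty (hP : (interior P).Nonempty) : (interior (-P)).Nonempty := by
  have : interior (-P) = -interior P := ((Homeomorph.neg ℝ³).preimage_interior P).symm
  rw [this]
  exact hP.neg

theorem interior_add_neg_interior_subset_of_covariogram_eq (hP : IsCompact P) (hP' : IsCompact P')
    (hcov : covariogram P = covariogram P') : interior P + -interior P ⊆ P' + -P' := by
  rintro _ ⟨y, hy, z, hz, rfl⟩
  have overlap_open : IsOpen (interior P ∩ ((y + z + ·) '' interior P)) :=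
    isOpen_interior.inter (isOpenMap_add_left (y + z) _ isOpen_interior)
  have overlap_volume_pos : 0 < volume (P ∩ ((y + z + ·) '' P)) :=
    (overlap_open.measure_pos volume ⟨y, hy, -z, hz, add_neg_cancel_right y z⟩).trans_le
      (measure_mono (Set.inter_subset_inter interior_subset (Set.image_mono interior_subset)))
  rw [volume_inter_translate_eq_of_covariogram_eq hP hP' hcov] at overlap_volume_pos
  obtain ⟨_, hx, x, hx', rfl⟩ := nonempty_of_measure_ne_zero overlap_volume_pos.ne'
  exact ⟨_, hx, -x, Set.neg_mem_neg.2 hx', add_neg_cancel_right _ _⟩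

theorem add_neg_subset_of_covariogram_eq (hP : IsCompact P) (hconv : Convex ℝ P)
    (hint : (interior P).Nonempty) (hP' : IsCompact P') (hcov : covariogram P = covariogram P') :
    P + -P ⊆ P' + -P' := by
  have subset_closure_interior : P ⊆ closure (interior P) :=
    (hconv.closure_interior_eq_closure_of_nonempty_interior hint).symm ▸ subset_closure
  have isClosed_add_neg : IsClosed (P' + -P') := (hP'.add hP'.neg).isClosed
  rintro _ ⟨x, hx, y, hy, rfl⟩
  have sub_mem_closure : x - -y ∈ closure (P' + -P') :=
    map_mem_closure₂ continuous_sub (subset_closure_interior hx) (subset_closure_interior hy)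
      fun a ha b hb ↦ interior_add_neg_interior_subset_of_covariogram_eq hP hP' hcov
        ⟨a, ha, -b, Set.neg_mem_neg.2 hb, (sub_eq_add_neg a b).symm⟩
  rwa [isClosed_add_neg.closure_eq, sub_neg_eq_add] at sub_mem_closure

end DifferenceBody

section Conclusion

variable {P P' : Set ℝ³} {w a c a' c' : ℝ³} {ψ : (ℝ × ℝ × ℝ) ≃L[ℝ] ℝ³} {e f e' f' : EdgeShape}

theorem HasExposedEdge.eq_or_eq_swap_of_covariogram_eq (hψ : IsEdgeFrame w ψ) (hP : IsCompact P)
    (hP' : IsCompact P') (hcov : covariogram P = covariogram P') (hPP' : P + -P = P' + -P')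
    (he : HasExposedEdge ψ w P a e) (hf : HasExposedEdge ψ w (-P) c f)
    (he' : HasExposedEdge ψ w P' a' e') (hf' : HasExposedEdge ψ w (-P') c' f')
    (length_pos : 0 < e.length) (length_eq : e.length = f.length) :
    e = e' ∧ f = f' ∨ e = f' ∧ f = e' := by
  obtain ⟨hac, length_add_eq⟩ := directedSegment_inj hψ.axis_ne_zero
    (add_nonneg e.length_nonneg f.length_nonneg) (add_nonneg e'.length_nonneg f'.length_nonneg)
    (by rw [← he.exposedFace_add_neg hf, hPP', he'.exposedFace_add_neg hf'])
  exact EdgeShape.eq_or_eq_swap_of_laplace_mul_eq (he.overlap hf) (he'.overlap hf') length_pos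
    length_eq length_add_eq.symm (eventually_laplace_mul_eq_of_covariogram_eq hP hP' hcov hac
      he.hasEdgeAtOrigin hf.hasEdgeAtOrigin he'.hasEdgeAtOrigin hf'.hasEdgeAtOrigin)

theorem HasExposedEdge.exists_of_add_neg_eq (hψ : IsEdgeFrame w ψ) (hP' : IsPolytope P')
    (hP'int : (interior P').Nonempty) (hPP' : P + -P = P' + -P')
    (he : HasExposedEdge ψ w P a e) (hf : HasExposedEdge ψ w (-P) c f)
    (length_pos : 0 < e.length) :
    ∃ a' e' c' f', HasExposedEdge ψ w P' a' e' ∧ HasExposedEdge ψ w (-P') c' f' := by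
  have span_add_neg : vectorSpan ℝ (exposedFace P' w + exposedFace (-P') w) =
      Submodule.span ℝ {ψ (1, 0)} := by
    rw [← exposedFace_add, ← hPP', he.exposedFace_add_neg hf,
      vectorSpan_directedSegment (add_pos_of_pos_of_nonneg length_pos f.length_nonneg)]
  have hP'ne : P'.Nonempty := hP'int.mono interior_subset
  obtain ⟨a', e', he'⟩ := hψ.exists_hasExposedEdge hP' hP'int <|
    (vectorSpan_le_vectorSpan_add_left _
      (exposedFace_nonempty hP'.neg.isCompact hP'ne.neg w)).trans_eq span_add_neg
  obtain ⟨c', f', hf'⟩ := hψ.exists_hasExposedEdge hP'.neg (interior_neg_nonempty hP'int) <|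
    (vectorSpan_le_vectorSpan_add_left _
      (exposedFace_nonempty hP'.isCompact hP'ne w)).trans_eq
      (add_comm (exposedFace P' w) _ ▸ span_add_neg)
  exact ⟨a', e', c', f', he', hf'⟩

theorem exists_hasExposedEdge_eq_or_swap (hP : IsPolytope P) (hP' : IsPolytope P')
    (hPint : (interior P).Nonempty) (hP'int : (interior P').Nonempty)
    (hcov : covariogram P = covariogram P') (hw : ‖w‖ = 1)
    (hedge : Module.finrank ℝ (vectorSpan ℝ (exposedFace P w)) = 1)
    (hpar : vectorSpan ℝ (exposedFace P w) = vectorSpan ℝ (exposedFace (-P) w))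
    (hlen : μH[1] (exposedFace P w) = μH[1] (exposedFace (-P) w)) :
    ∃ (ψ : (ℝ × ℝ × ℝ) ≃L[ℝ] ℝ³) (a c a' c' : ℝ³) (e f : EdgeShape),
      IsEdgeFrame w ψ ∧ 0 < e.length ∧ e.length = f.length ∧
      HasExposedEdge ψ w P a e ∧ HasExposedEdge ψ w (-P) c f ∧
      (HasExposedEdge ψ w P' a' e ∧ HasExposedEdge ψ w (-P') c' f ∨
        HasExposedEdge ψ w P' a' f ∧ HasExposedEdge ψ w (-P') c' e) := by
  obtain ⟨u, hu, span_eq⟩ := exists_norm_eq_one_and_eq_span hedge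
  obtain ⟨ψ, hψ, rfl⟩ := exists_isEdgeFrame hw hu
    (inner_eq_zero_of_mem_vectorSpan_exposedFace (P := P)
      (span_eq ▸ Submodule.mem_span_singleton_self u))
  obtain ⟨a, e, he⟩ := hψ.exists_hasExposedEdge hP hPint span_eq.le
  obtain ⟨c, f, hf⟩ := hψ.exists_hasExposedEdge hP.neg (interior_neg_nonempty hPint)
    (hpar ▸ span_eq).le
  have length_pos := he.length_pos hedge
  have length_eq : e.length = f.length := by
    rwa [he.hausdorffMeasure_eq hψ, hf.hausdorffMeasure_eq hψ,
      ENNReal.ofReal_eq_ofReal_iff e.length_nonneg f.length_nonneg] at hlen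
  have hPP' : P + -P = P' + -P' :=
    (add_neg_subset_of_covariogram_eq hP.isCompact hP.convex hPint hP'.isCompact hcov).antisymm
      (add_neg_subset_of_covariogram_eq hP'.isCompact hP'.convex hP'int hP.isCompact hcov.symm)
  obtain ⟨a', e', c', f', he', hf'⟩ :=
    he.exists_of_add_neg_eq hψ hP' hP'int hPP' hf length_pos
  refine ⟨ψ, a, c, a', c', e, f, hψ, length_pos, length_eq, he, hf, ?_⟩
  rcases he.eq_or_eq_swap_of_covariogram_eq hψ hP.isCompact hP'.isCompact hcov hPP' hf he' hf'
    length_pos length_eq with ⟨rfl, rfl⟩ | ⟨rfl, rfl⟩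
  · exact .inl ⟨he', hf'⟩
  · exact .inr ⟨he', hf'⟩

theorem vectorSpan_hausdorffMeasure_supportCone_of_covariogram_eq (hP : IsPolytope P)
    (hP' : IsPolytope P') (hPint : (interior P).Nonempty) (hP'int : (interior P').Nonempty)
    (hcov : covariogram P = covariogram P') (hw : ‖w‖ = 1)
    (hedge : Module.finrank ℝ (vectorSpan ℝ (exposedFace P w)) = 1)
    (hpar : vectorSpan ℝ (exposedFace P w) = vectorSpan ℝ (exposedFace (-P) w))
    (hlen : μH[1] (exposedFace P w) = μH[1] (exposedFace (-P) w)) :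
    (vectorSpan ℝ (exposedFace P' w) = vectorSpan ℝ (exposedFace P w) ∧
      vectorSpan ℝ (exposedFace (-P') w) = vectorSpan ℝ (exposedFace P w)) ∧
    (μH[1] (exposedFace P' w) = μH[1] (exposedFace P w) ∧
      μH[1] (exposedFace (-P') w) = μH[1] (exposedFace P w)) ∧
    ((supportCone P (exposedFace P w) = supportCone P' (exposedFace P' w) ∧
        supportCone (-P) (exposedFace (-P) w) = supportCone (-P') (exposedFace (-P') w)) ∨
      (supportCone P (exposedFace P w) = supportCone (-P') (exposedFace (-P') w) ∧
        supportCone (-P) (exposedFace (-P) w) = supportCone P' (exposedFace P' w))) := by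
  obtain ⟨ψ, a, c, a', c', e, f, hψ, e_pos, length_eq, he, hf, h⟩ :=
    exists_hasExposedEdge_eq_or_swap hP hP' hPint hP'int hcov hw hedge hpar hlen
  have f_pos : 0 < f.length := length_eq ▸ e_pos
  rw [he.vectorSpan_eq e_pos, he.hausdorffMeasure_eq hψ, he.supportCone_eq hψ e_pos,
    hf.supportCone_eq hψ f_pos]
  rcases h with ⟨he', hf'⟩ | ⟨hf', he'⟩
  all_goals
    rw [he'.vectorSpan_eq e_pos, hf'.vectorSpan_eq f_pos, he'.hausdorffMeasure_eq hψ,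
      hf'.hausdorffMeasure_eq hψ, he'.supportCone_eq hψ e_pos, hf'.supportCone_eq hψ f_pos,
      length_eq]
    tauto

end Conclusion

/-- If `g_P = g_{P'}` and `S₁ = P_w`, `S₂ = P_{−w}` are parallel edges of `P` of equal
length, then `S₁' = P'_w`, `S₂' = P'_{−w}` are edges of `P'` parallel to `S₁` of the same
length, and the support cones match either directly or after a reflection. -/
theorem antipodal_parallel_edges_of_equal_length
    (P P' : Set (EuclideanSpace ℝ (Fin 3)))
    (hP : IsPolytope P) (hP' : IsPolytope P')
    (hPint : (interior P).Nonempty) (hP'int : (interior P').Nonempty)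
    (hcov : covariogram P = covariogram P')
    (w : EuclideanSpace ℝ (Fin 3)) (hw : ‖w‖ = 1)
    (S₁ S₂ S₁' S₂' : Set (EuclideanSpace ℝ (Fin 3)))
    (hS₁ : S₁ = exposedFace P w) (hS₂ : S₂ = exposedFace P (-w))
    (hS₁' : S₁' = exposedFace P' w) (hS₂' : S₂' = exposedFace P' (-w))
    -- `S₁` and `S₂` are edges of `P`
    (hedge₁ : Module.finrank ℝ (vectorSpan ℝ S₁) = 1)
    (hedge₂ : Module.finrank ℝ (vectorSpan ℝ S₂) = 1)
    -- they are parallel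
    (hpar : vectorSpan ℝ S₁ = vectorSpan ℝ S₂)
    -- and of equal length
    (hlen : μH[1] S₁ = μH[1] S₂) :
    Module.finrank ℝ (vectorSpan ℝ S₁') = 1 ∧
    Module.finrank ℝ (vectorSpan ℝ S₂') = 1 ∧
    vectorSpan ℝ S₁' = vectorSpan ℝ S₁ ∧
    vectorSpan ℝ S₂' = vectorSpan ℝ S₁ ∧
    μH[1] S₁' = μH[1] S₁ ∧ μH[1] S₂' = μH[1] S₁ ∧
    ((supportCone P S₁ = supportCone P' S₁' ∧ supportCone P S₂ = supportCone P' S₂') ∨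
      (supportCone P S₁ = -supportCone P' S₂' ∧ supportCone P S₂ = -supportCone P' S₁')) := by
  subst hS₁ hS₂ hS₁' hS₂'
  rw [← vectorSpan_exposedFace_neg] at hpar
  rw [← hausdorffMeasure_exposedFace_neg] at hlen
  obtain ⟨⟨span₁, span₂⟩, ⟨length₁, length₂⟩, cones⟩ :=
    vectorSpan_hausdorffMeasure_supportCone_of_covariogram_eq hP hP' hPint hP'int hcov hw hedge₁
      hpar hlen
  rw [vectorSpan_exposedFace_neg] at span₂
  rw [hausdorffMeasure_exposedFace_neg] at length₂
  simp only [supportCone_exposedFace_neg, neg_eq_iff_eq_neg, neg_neg] at cones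
  exact ⟨span₁ ▸ hedge₁, span₂ ▸ hedge₁, span₁, span₂, length₁, length₂, cones⟩
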